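/- Let λ, μ, ν ∈ P[n]. For T ∈ SVT^λ_{ν−λ}(μ), define Γ(T) := Ω(Y_T, M'_T), where (X_T,M_T)=Υ^{−1}(T), Y_T=(y_{i,j}) with y_{i,j}=N_{n−i+j,n−i} and N_{i,k} := λ_i + (number of occurrences of i in the top k rows of T), and M'_T := {(n+1−j,i−j) : (i,j)∈M_T}. Then Γ(T) is a μ-dominant set-valued contratableau of shape λ with weight ν−μ; i.e., Γ maps SVT^λ_{ν−λ}(μ) into SVCT^μ_{ν−μ}(λ). -/

import Mathlib

/-!
Write `N_{i,k}` for `lam i` plus the number of `i`s in the top `k` rows of `T`, and `m_{i,j}` for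
the indicator of `(i,j) ∈ M`.  Row `r` of `Υ(x, M)` holds `x_{i,r} - x_{i-1,r} + m_{i,r}` entries
`i` (`rowOcc_upsilon`), and there is an analogous count for `Ω` (`rowOcc_omega`).

The rows of `T` give weakly decreasing words, so each row contributes its `i+1`s before its `i`s,
and `lam`-dominance yields `N_{i+1,k+1} ≤ N_{i,k}` (`Ndom_le_of_dominant`).  These are the `NE`
inequalities of `Y_T`; its `SE` differences count entries in the rows of `T`, hence are nonnegative,
and positive at the transported marks, since a mark `(i,j)` puts an `i` into row `j`.  So
`(Y_T, M')` is a marked GT pattern with bottom row `lam` (`Ypat_isMGTZ`), and `Ω` of it is a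
set-valued contratableau (`omega_isSVCT`).

Telescoping the row counts of `Γ(T)` gives `N_{k+v-1,v-1} + x_{k+v-1,v}` for `mu v` plus the number
of `v`s in the rows `k, …, n` from the bottom (`upCount_eq`).  At `k = 1` this is
`N_{v,v-1} + x_{v,v} = N_{v,v} = nu v`, which is the weight.  Dominance follows from its row-by-row
form (`dominant_append_flatten`), which by this formula amounts to `m_{k+v,v} ≤ SE_{k+v,v}(x)`
(`upCount_le`), the condition for `M` to be a set of marks on `x`.
-/

/-!
Common combinatorial definitions: partitions, (skew) set-valued tableaux,
contratableaux, reading words, dominance, Gelfand-Tsetlin patterns, and the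
maps Υ and Ω.  Partitions are encoded as functions `ℕ → ℕ` whose parts are
`lam 1, lam 2, …` (with `lam 0 = 0` as a normalization).  Tableaux are encoded
as functions `ℕ → ℕ → Finset ℕ` assigning to each box (row, column), both
indexed from `1`, its (finite) set of entries, with value `∅` outside the
shape. -/

/-- `lam` is a partition with at most `n` nonzero parts `lam 1 ≥ lam 2 ≥ ⋯`. -/
def IsPartition (n : ℕ) (lam : ℕ → ℕ) : Prop :=
  lam 0 = 0 ∧ (∀ i, 1 ≤ i → lam (i + 1) ≤ lam i) ∧ (∀ i, n < i → lam i = 0)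

/-- `|lam|`, the sum of the parts of a partition in `P[n]`. -/
def sumParts (n : ℕ) (lam : ℕ → ℕ) : ℕ := ∑ i ∈ Finset.Icc 1 n, lam i

/-- The boxes of the skew Young diagram `lam/mu` (rows indexed from the top,
starting at `1`; columns from the left, starting at `1`). -/
def SkewBox (lam mu : ℕ → ℕ) (i j : ℕ) : Prop :=
  1 ≤ i ∧ mu i < j ∧ j ≤ lam i

/-- The boxes of the straight Young diagram of `mu`. -/
def ShapeBox (mu : ℕ → ℕ) (i j : ℕ) : Prop :=
  1 ≤ i ∧ 1 ≤ j ∧ j ≤ mu i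

/-- A semi-standard set-valued tableau with entries in `[n] = {1, …, n}` on a
given set `box` of boxes (rows indexed from the top): every box carries a
nonempty subset of `[n]`, rows weakly increase from left to right, columns
strictly increase from top to bottom, and the filling vanishes off the shape. -/
def IsSSVT (n : ℕ) (box : ℕ → ℕ → Prop) (T : ℕ → ℕ → Finset ℕ) : Prop :=
  (∀ i j, box i j → (T i j).Nonempty) ∧
  (∀ i j, box i j → T i j ⊆ Finset.Icc 1 n) ∧
  (∀ i j, ¬ box i j → T i j = ∅) ∧
  (∀ i j, box i j → box i (j + 1) → ∀ a ∈ T i j, ∀ b ∈ T i (j + 1), a ≤ b) ∧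
  (∀ i j, box i j → box (i + 1) j → ∀ a ∈ T i j, ∀ b ∈ T (i + 1) j, a < b)

/-- The boxes of the rotated shape `C(lam)` (for `lam ∈ P[n]`): the `j`-th row
from the *bottom* (`1 ≤ j ≤ n`) consists of `lam j` right-justified boxes, in
columns `lam 1 - lam j + 1, …, lam 1`. -/
def ContraBox (n : ℕ) (lam : ℕ → ℕ) (j c : ℕ) : Prop :=
  1 ≤ j ∧ j ≤ n ∧ lam 1 - lam j < c ∧ c ≤ lam 1

/-- A set-valued contratableau of shape `lam` with entries in `[n]`: a
semi-standard set-valued tableau of shape `C(lam)`.  Here `T j c` is the box in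
the `j`-th row from the bottom and column `c`; "columns strictly increase from
top to bottom" says entries of row `j+1` (which lies above row `j`) are
strictly smaller than those below them in row `j`. -/
def IsSVCT (n : ℕ) (lam : ℕ → ℕ) (T : ℕ → ℕ → Finset ℕ) : Prop :=
  (∀ j c, ContraBox n lam j c → (T j c).Nonempty) ∧
  (∀ j c, ContraBox n lam j c → T j c ⊆ Finset.Icc 1 n) ∧
  (∀ j c, ¬ ContraBox n lam j c → T j c = ∅) ∧
  (∀ j c, ContraBox n lam j c → ContraBox n lam j (c + 1) →
    ∀ a ∈ T j c, ∀ b ∈ T j (c + 1), a ≤ b) ∧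
  (∀ j c, ContraBox n lam j c → ContraBox n lam (j + 1) c →
    ∀ a ∈ T (j + 1) c, ∀ b ∈ T j c, a < b)

/-- The entries of one cell, read in decreasing order. -/
def cellWord (S : Finset ℕ) : List ℕ := (S.sort (· ≤ ·)).reverse

/-- The row word: rows are read from top to bottom, each row from right to
left, the entries of each cell in decreasing order (reading over the rectangle
with `R` rows and `W` columns, which covers the shape; cells off the shape are
empty and contribute nothing). -/
def rowWordRect (R W : ℕ) (T : ℕ → ℕ → Finset ℕ) : List ℕ :=
  ((List.range R).map (fun i =>
    (((List.range W).reverse).map (fun j => cellWord (T (i + 1) (j + 1)))).flatten)).flatten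

/-- The column word: columns are read from rightmost to leftmost, each column
from top to bottom, the entries of each cell in decreasing order. -/
def colWordRect (R W : ℕ) (T : ℕ → ℕ → Finset ℕ) : List ℕ :=
  (((List.range W).reverse).map (fun j =>
    ((List.range R).map (fun i => cellWord (T (i + 1) (j + 1)))).flatten)).flatten

/-- The row word of a contratableau whose rows are indexed from the bottom
(`1, …, n`): rows are read from top to bottom (i.e. row `n` first), each row
from right to left, cell entries in decreasing order. -/
def contraRowWord (n W : ℕ) (T : ℕ → ℕ → Finset ℕ) : List ℕ :=
  (((List.range n).reverse).map (fun j =>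
    (((List.range W).reverse).map (fun c => cellWord (T (j + 1) (c + 1)))).flatten)).flatten

/-- A word is dominant if every prefix contains at least as many `i`'s as
`(i+1)`'s, for every `i ≥ 1`. -/
def Dominant (u : List ℕ) : Prop :=
  ∀ t i, 1 ≤ i → (u.take t).count (i + 1) ≤ (u.take t).count i

/-- The row word of the superstandard tableau `T_lam` of shape and weight
`lam` (its `i`-th row consists of `lam i` many `i`'s), for `lam ∈ P[n]`. -/
def superWord (n : ℕ) (lam : ℕ → ℕ) : List ℕ :=
  ((List.range n).map (fun i => List.replicate (lam (i + 1)) (i + 1))).flatten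

/-- A word `u` is `lam`-dominant if `r(T_lam) * u` is dominant. -/
def LamDominant (n : ℕ) (lam : ℕ → ℕ) (u : List ℕ) : Prop :=
  Dominant (superWord n lam ++ u)

/-- The number of occurrences of the entry `v` in row `r` of `T`
(columns `1, …, W`). -/
def rowOcc (W : ℕ) (T : ℕ → ℕ → Finset ℕ) (r v : ℕ) : ℕ :=
  ∑ c ∈ Finset.Icc 1 W, if v ∈ T r c then 1 else 0

/-- The number of occurrences of the entry `v` in `T` (the `v`-th coordinate
of the weight `wt T`), rows `1, …, R` and columns `1, …, W`. -/
def wtT (R W : ℕ) (T : ℕ → ℕ → Finset ℕ) (v : ℕ) : ℕ :=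
  ∑ r ∈ Finset.Icc 1 R, rowOcc W T r v

/-- The total number of entries `|T|` of a set-valued tableau. -/
def sizeT (R W : ℕ) (T : ℕ → ℕ → Finset ℕ) : ℕ :=
  ∑ r ∈ Finset.Icc 1 R, ∑ c ∈ Finset.Icc 1 W, (T r c).card

/-- A Gelfand-Tsetlin pattern of size `n`: a triangular array of integers
`x i j` (`1 ≤ j ≤ i ≤ n`) with `NE_{i,j} = x i j - x (i-1) j ≥ 0` and
`SE_{i,j} = x (i-1) j - x i (j+1) ≥ 0` for all `1 ≤ j < i ≤ n`, normalized to
vanish outside the triangle. -/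
def IsGT (n : ℕ) (x : ℕ → ℕ → ℤ) : Prop :=
  (∀ i j, 1 ≤ j → j < i → i ≤ n → x (i - 1) j ≤ x i j ∧ x i (j + 1) ≤ x (i - 1) j) ∧
  (∀ i j, ¬ (1 ≤ j ∧ j ≤ i ∧ i ≤ n) → x i j = 0)

/-- A GT pattern in `GT_ℤ(lam)`: bottom row equal to `lam`. -/
def IsGTZ (n : ℕ) (lam : ℕ → ℕ) (x : ℕ → ℕ → ℤ) : Prop :=
  IsGT n x ∧ ∀ j, 1 ≤ j → j ≤ n → x n j = (lam j : ℤ)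

/-- A valid set of marks on a GT pattern: `M ⊆ {(i,j) : 1 ≤ j < i ≤ n` and
`SE_{i,j}(x) > 0}`. -/
def MarksOK (n : ℕ) (x : ℕ → ℕ → ℤ) (M : Finset (ℕ × ℕ)) : Prop :=
  ∀ p ∈ M, 1 ≤ p.2 ∧ p.2 < p.1 ∧ p.1 ≤ n ∧ 0 < x (p.1 - 1) p.2 - x p.1 (p.2 + 1)

/-- A marked GT pattern in `MGT_ℤ(lam)`. -/
def IsMGTZ (n : ℕ) (lam : ℕ → ℕ) (x : ℕ → ℕ → ℤ) (M : Finset (ℕ × ℕ)) : Prop :=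
  IsGTZ n lam x ∧ MarksOK n x M

/-- The map `Υ` from marked GT patterns to set-valued tableaux, in closed form:
the entry `i` lies in the box in row `r`, column `c` iff `x_{i-1,r} < c ≤ x_{i,r}`
(the horizontal strip `x^{(i)}/x^{(i-1)}` is filled with `i`'s), or `(i,r) ∈ M`
and `c = x_{i-1,r}` (for a mark, `i` is added to the rightmost box of row `r`
of `X^{(i-1)}`, the box containing `i-1` there). -/
def Upsilon (n : ℕ) (x : ℕ → ℕ → ℤ) (M : Finset (ℕ × ℕ)) : ℕ → ℕ → Finset ℕ :=
  fun r c => (Finset.Icc 1 n).filter (fun i =>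
    (x (i - 1) r < (c : ℤ) ∧ (c : ℤ) ≤ x i r) ∨ ((i, r) ∈ M ∧ (c : ℤ) = x (i - 1) r))

/-- The map `Ω` from marked GT patterns to set-valued contratableaux of shape
`lam`, in closed form.  Rows are indexed from the bottom and the box in row `j`
and column `c` is the `d`-th box from the right where `d = lam 1 + 1 - c`.
The entry `v = n + 1 - i` lies there iff `y_{i-1,j} < d ≤ y_{i,j}` (the boxes
of `C(y^{(i)})/C(y^{(i-1)})` are filled with `n+1-i`), or `(i,j) ∈ M` and
`d = y_{i-1,j}` (for a mark, `n+1-i` is added to the leftmost box of row `j`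
of `Y^{(i-1)}`, the box containing `n+2-i` there). -/
def Omega (n : ℕ) (lam : ℕ → ℕ) (y : ℕ → ℕ → ℤ) (M : Finset (ℕ × ℕ)) : ℕ → ℕ → Finset ℕ :=
  fun j c => (Finset.Icc 1 n).filter (fun v =>
    (y (n - v) j < (lam 1 : ℤ) + 1 - (c : ℤ) ∧ (lam 1 : ℤ) + 1 - (c : ℤ) ≤ y (n + 1 - v) j) ∨
      ((n + 1 - v, j) ∈ M ∧ (lam 1 : ℤ) + 1 - (c : ℤ) = y (n - v) j))

/-- `N_{i,k} = lam i + (number of occurrences of i in the top k rows of T)`. -/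
def Ndom (W : ℕ) (lam : ℕ → ℕ) (T : ℕ → ℕ → Finset ℕ) (i k : ℕ) : ℕ :=
  lam i + ∑ r ∈ Finset.Icc 1 k, rowOcc W T r i

/-- `N↑_{i,k} = mu i + (number of occurrences of i in rows k, k+1, …, n from
the bottom of a contratableau)`. -/
def Nup (n W : ℕ) (mu : ℕ → ℕ) (T : ℕ → ℕ → Finset ℕ) (i k : ℕ) : ℕ :=
  mu i + ∑ r ∈ Finset.Icc k n, rowOcc W T r i

/-- The GT pattern `Y_T` with entries `y_{i,j} = N_{n-i+j, n-i}` (normalized to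
`0` outside the triangle). -/
def Ypat (n W : ℕ) (lam : ℕ → ℕ) (T : ℕ → ℕ → Finset ℕ) : ℕ → ℕ → ℤ :=
  fun i j => if 1 ≤ j ∧ j ≤ i ∧ i ≤ n then (Ndom W lam T (n - i + j) (n - i) : ℤ) else 0

/-- The transported mark set `M' = {(n+1-j, i-j) : (i,j) ∈ M}`. -/
def MarksOf (n : ℕ) (M : Finset (ℕ × ℕ)) : Finset (ℕ × ℕ) :=
  M.image (fun p => (n + 1 - p.2, p.1 - p.2))

/-- The stable Grothendieck polynomial `G_lam(x_1, …, x_n)`, a polynomial in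
variables `X 1, …, X n`. -/
noncomputable def Groth (n : ℕ) (lam : ℕ → ℕ) : MvPolynomial ℕ ℤ :=
  ∑ᶠ T ∈ {T : ℕ → ℕ → Finset ℕ | IsSSVT n (ShapeBox lam) T},
    (-1 : MvPolynomial ℕ ℤ) ^ (sizeT n (lam 1) T - sumParts n lam) *
      ∏ k ∈ Finset.Icc 1 n, MvPolynomial.X k ^ wtT n (lam 1) T k

/-! ### Counting along the rows of a word -/

/-- If appending any whole row leaves the number of `i + 1`s at most the number of `i`s
*before* that row, then the word is dominant: within a row, the counts of `i + 1` never
exceed their value at the end of the row and the counts of `i` are at least their value at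
its start. -/
lemma dominant_append_flatten (L : List (List ℕ)) : ∀ s : List ℕ, Dominant s →
    (∀ k, k < L.length → ∀ i, 1 ≤ i →
      (s ++ (L.take (k + 1)).flatten).count (i + 1) ≤ (s ++ (L.take k).flatten).count i) →
    Dominant (s ++ L.flatten) := by
  induction L with
  | nil => intro s hs _; simpa using hs
  | cons r L ih =>
    intro s hs h
    rw [List.flatten_cons, ← List.append_assoc]
    apply ih
    · intro t i hi
      have h0 := h 0 (by simp) i hi
      simp only [Nat.zero_add, List.take_succ_cons, List.take_zero, List.flatten_cons,
        List.flatten_nil, List.append_nil, List.count_append] at h0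
      have hst := hs t i hi
      rw [List.take_append, List.count_append, List.count_append]
      rcases le_total t s.length with ht | ht
      · simpa [Nat.sub_eq_zero_of_le ht] using hst
      · rw [List.take_of_length_le ht]
        have := (List.take_sublist (t - s.length) r).count_le (i + 1)
        omega
    · intro k hk i hi
      have := h (k + 1) (by simpa using hk) i hi
      simpa [List.append_assoc] using this

/-- A weakly decreasing list has a prefix containing all its `i + 1`s and none of its `i`s. -/
lemma exists_prefix_count (i : ℕ) (r : List ℕ) (hr : r.Pairwise (· ≥ ·)) :
    ∃ p, p <+: r ∧ p.count i = 0 ∧ p.count (i + 1) = r.count (i + 1) := by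
  induction r with
  | nil => exact ⟨[], by simp⟩
  | cons a r ih =>
    rw [List.pairwise_cons] at hr
    obtain ⟨p, hp, h0, h1⟩ := ih hr.2
    by_cases ha : i + 1 ≤ a
    · refine ⟨a :: p, by simpa using hp, ?_, ?_⟩
      · rw [List.count_cons_of_ne (by omega), h0]
      · simp only [List.count_cons, h1]
    · refine ⟨[], by simp, by simp, ?_⟩
      symm
      rw [List.count_nil, List.count_eq_zero]
      intro hmem
      rcases List.mem_cons.1 hmem with h | h
      · omega
      · have := hr.1 _ h
        omega

/-- A weakly decreasing row `r` of a dominant word contributes its `i + 1`s before its `i`s. -/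
lemma count_le_of_dominant (s r t : List ℕ) (hd : Dominant (s ++ (r ++ t)))
    (hr : r.Pairwise (· ≥ ·)) (i : ℕ) (hi : 1 ≤ i) :
    (s ++ r).count (i + 1) ≤ s.count i := by
  obtain ⟨p, ⟨q, hq⟩, h0, h1⟩ := exists_prefix_count i r hr
  have h := hd (s ++ p).length i hi
  rw [← hq, show s ++ (p ++ q ++ t) = (s ++ p) ++ (q ++ t) by simp, List.take_left] at h
  simp only [List.count_append] at h ⊢
  omega

lemma count_cellWord (S : Finset ℕ) (v : ℕ) :
    (cellWord S).count v = if v ∈ S then 1 else 0 := by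
  unfold cellWord
  rw [List.count_reverse]
  split_ifs with h
  · exact List.count_eq_one_of_mem (Finset.sort_nodup _ _) ((Finset.mem_sort _).2 h)
  · exact List.count_eq_zero.2 (fun h' => h ((Finset.mem_sort _).1 h'))

/-- The word of row `r` of a filling: columns `W, …, 1`, each cell in decreasing order. -/
def rowWord (W : ℕ) (T : ℕ → ℕ → Finset ℕ) (r : ℕ) : List ℕ :=
  (((List.range W).reverse).map (fun c => cellWord (T r (c + 1)))).flatten

lemma count_flatten_map_range (f : ℕ → List ℕ) (k v : ℕ) :
    (((List.range k).map f).flatten).count v = ∑ t ∈ Finset.range k, (f t).count v := by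
  induction k with
  | zero => simp
  | succ k ih => simp [List.range_succ, Finset.sum_range_succ, ih]

lemma count_rowWord (W : ℕ) (T : ℕ → ℕ → Finset ℕ) (r v : ℕ) :
    (rowWord W T r).count v = rowOcc W T r v := by
  unfold rowWord rowOcc
  induction W with
  | zero => simp
  | succ W ih =>
    rw [Finset.sum_Icc_succ_top (by omega), ← ih, List.range_succ]
    simp [count_cellWord, add_comm]

lemma sum_Icc_one_eq_range (f : ℕ → ℕ) (k : ℕ) :
    ∑ r ∈ Finset.Icc 1 k, f r = ∑ t ∈ Finset.range k, f (t + 1) := by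
  induction k with
  | zero => simp
  | succ k ih => rw [Finset.sum_Icc_succ_top (by omega), Finset.sum_range_succ, ih]

lemma pairwise_rowWord (W : ℕ) (T : ℕ → ℕ → Finset ℕ) (r : ℕ)
    (h : ∀ c c', c < c' → ∀ a ∈ T r c, ∀ b ∈ T r c', a ≤ b) :
    (rowWord W T r).Pairwise (· ≥ ·) := by
  unfold rowWord
  rw [List.pairwise_flatten]
  constructor
  · intro l hl
    obtain ⟨c, -, rfl⟩ := List.mem_map.1 hl
    unfold cellWord
    rw [List.pairwise_reverse]
    exact Finset.pairwise_sort _ _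
  · rw [List.pairwise_map, List.pairwise_reverse]
    refine List.pairwise_lt_range.imp ?_
    intro c c' hc a ha b hb
    simp only [cellWord, List.mem_reverse, Finset.mem_sort] at ha hb
    exact h _ _ (by omega) b hb a ha

lemma count_superWord (lam : ℕ → ℕ) (k v : ℕ) (hv : 1 ≤ v) :
    (superWord k lam).count v = if v ≤ k then lam v else 0 := by
  unfold superWord
  induction k with
  | zero => simp; omega
  | succ k ih =>
    rw [List.range_succ, List.map_append, List.flatten_append, List.count_append, ih]
    simp only [List.map_cons, List.map_nil, List.flatten_cons, List.flatten_nil, List.append_nil,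
      List.count_replicate, beq_iff_eq]
    rcases lt_trichotomy v (k + 1) with h | h | h
    · simp [show v ≤ k by omega, show v ≤ k + 1 by omega, show k + 1 ≠ v by omega]
    · subst h; simp
    · simp [show ¬ v ≤ k by omega, show ¬ v ≤ k + 1 by omega, show k + 1 ≠ v by omega]

lemma count_superWord_of_partition (n : ℕ) (lam : ℕ → ℕ) (hlam : IsPartition n lam)
    (v : ℕ) (hv : 1 ≤ v) : (superWord n lam).count v = lam v := by
  rw [count_superWord lam n v hv]
  split_ifs with h
  · rfl
  · exact (hlam.2.2 v (by omega)).symm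

lemma dominant_superWord (n : ℕ) (lam : ℕ → ℕ) (hlam : IsPartition n lam) :
    Dominant (superWord n lam) := by
  have key := dominant_append_flatten
    ((List.range n).map (fun i => List.replicate (lam (i + 1)) (i + 1))) []
    (by intro t i _; simp) ?_
  · simpa [superWord] using key
  · intro k hk i hi
    simp only [List.length_map, List.length_range] at hk
    simp only [List.nil_append, ← List.map_take, List.take_range,
      min_eq_left (show k + 1 ≤ n by omega), min_eq_left hk.le]
    change (superWord (k + 1) lam).count (i + 1) ≤ (superWord k lam).count i
    rw [count_superWord _ _ _ (by omega), count_superWord _ _ _ hi]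
    split_ifs
    · exact hlam.2.1 i hi
    · omega
    · omega
    · exact le_rfl

lemma partition_le_one (n : ℕ) (lam : ℕ → ℕ) (hlam : IsPartition n lam) (j : ℕ) :
    lam j ≤ lam 1 := by
  rcases Nat.eq_zero_or_pos j with rfl | hj
  · rw [hlam.1]; omega
  · induction j, hj using Nat.le_induction with
    | base => exact le_rfl
    | succ j hj ih => exact (hlam.2.1 j hj).trans ih

/-- Dominance of a word split into weakly decreasing rows, read off row by row:
`N_{i+1,k+1} ≤ N_{i,k}`. -/
lemma Ndom_le_of_dominant (n W : ℕ) (lam : ℕ → ℕ) (hlam : IsPartition n lam)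
    (T : ℕ → ℕ → Finset ℕ) (hd : LamDominant n lam (rowWordRect n W T))
    (hT : ∀ r c c', c < c' → ∀ a ∈ T r c, ∀ b ∈ T r c', a ≤ b)
    (k i : ℕ) (hk : k < n) (hi : 1 ≤ i) :
    Ndom W lam T (i + 1) (k + 1) ≤ Ndom W lam T i k := by
  have hcount : ∀ m v, (((List.range m).map (fun t => rowWord W T (t + 1))).flatten).count v
      = ∑ r ∈ Finset.Icc 1 m, rowOcc W T r v := by
    intro m v
    rw [count_flatten_map_range, sum_Icc_one_eq_range]
    simp only [count_rowWord]
  have hsplit : rowWordRect n W T = ((List.range k).map (fun t => rowWord W T (t + 1))).flatten ++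
      (rowWord W T (k + 1) ++
        ((List.range (n - k - 1)).map (fun t => rowWord W T (k + 1 + t + 1))).flatten) := by
    obtain ⟨q, rfl⟩ : ∃ q, n = k + 1 + q := ⟨n - k - 1, by omega⟩
    rw [show k + 1 + q - k - 1 = q by omega]
    change ((List.range (k + 1 + q)).map (fun t => rowWord W T (t + 1))).flatten = _
    rw [List.range_add, List.range_succ]
    simp [Function.comp_def]
  unfold LamDominant at hd
  rw [hsplit, ← List.append_assoc] at hd
  have := count_le_of_dominant _ _ _ hd (pairwise_rowWord W T _ (hT _)) i hi
  simp only [List.count_append, hcount, count_rowWord] at this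
  rw [count_superWord_of_partition n lam hlam _ (by omega),
    count_superWord_of_partition n lam hlam _ hi] at this
  unfold Ndom
  rw [Finset.sum_Icc_succ_top (by omega)]
  omega

/-! ### Gelfand–Tsetlin patterns -/

lemma gt_nonneg (n : ℕ) (lam : ℕ → ℕ) (y : ℕ → ℕ → ℤ) (hy : IsGTZ n lam y) (i j : ℕ) :
    0 ≤ y i j := by
  by_cases hin : 1 ≤ j ∧ j ≤ i ∧ i ≤ n
  · obtain ⟨d, hd⟩ : ∃ d, n = i + d := ⟨n - i, by omega⟩
    induction d generalizing i j with
    | zero =>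
      obtain rfl : n = i := hd
      rw [hy.2 j hin.1 hin.2.1]
      positivity
    | succ d ih =>
      have h1 := ih (i + 1) (j + 1) (by omega) (by omega)
      have h2 := (hy.1.1 (i + 1) j hin.1 (by omega) (by omega)).2
      simp only [Nat.add_sub_cancel] at h2
      omega
  · rw [hy.1.2 i j hin]

lemma gt_mono (n : ℕ) (lam : ℕ → ℕ) (y : ℕ → ℕ → ℤ) (hy : IsGTZ n lam y) (i i' j : ℕ)
    (h : i ≤ i') (hi' : i' ≤ n) : y i j ≤ y i' j := by
  induction i', h using Nat.le_induction with
  | base => exact le_rfl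
  | succ k hk ih =>
    refine (ih (by omega)).trans ?_
    by_cases hin : 1 ≤ j ∧ j ≤ k ∧ k ≤ n
    · have := (hy.1.1 (k + 1) j hin.1 (by omega) (by omega)).1
      simpa using this
    · rw [hy.1.2 k j hin]
      exact gt_nonneg n lam y hy _ _

lemma gt_le (n : ℕ) (lam : ℕ → ℕ) (y : ℕ → ℕ → ℤ) (hy : IsGTZ n lam y) (i j : ℕ) :
    y i j ≤ lam j := by
  by_cases hin : 1 ≤ j ∧ j ≤ i ∧ i ≤ n
  · rw [← hy.2 j hin.1 (by omega)]
    exact gt_mono n lam y hy i n j hin.2.2 le_rfl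
  · rw [hy.1.2 i j hin]
    positivity

lemma mark_pos (n : ℕ) (lam : ℕ → ℕ) (y : ℕ → ℕ → ℤ) (M : Finset (ℕ × ℕ))
    (hy : IsMGTZ n lam y M) (i j : ℕ) (h : (i, j) ∈ M) : 1 ≤ y (i - 1) j := by
  have h1 := (hy.2 _ h).2.2.2
  have h2 := gt_nonneg n lam y hy.1 i (j + 1)
  simp only at h1
  omega

/-! ### Occurrences in `Υ` and `Ω` -/

lemma sum_strip (W : ℕ) (A B : ℤ) (m : Prop) [Decidable m] (hA : 0 ≤ A) (hAB : A ≤ B)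
    (hB : B ≤ W) (hm : m → 1 ≤ A) :
    ((∑ c ∈ Finset.Icc 1 W,
      if ((A < (c : ℤ) ∧ (c : ℤ) ≤ B) ∨ (m ∧ (c : ℤ) = A)) then 1 else 0 : ℕ) : ℤ)
      = B - A + if m then 1 else 0 := by
  lift A to ℕ using hA
  lift B to ℕ using (by omega)
  rw [← Finset.card_filter]
  by_cases h : m
  · have : (Finset.Icc 1 W).filter
        (fun c : ℕ => (((A : ℤ) < (c : ℤ) ∧ (c : ℤ) ≤ B) ∨ (m ∧ (c : ℤ) = A))) =
        Finset.Icc A B := by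
      have := hm h
      ext c
      simp only [Finset.mem_filter, Finset.mem_Icc, h, true_and]
      omega
    rw [this, Nat.card_Icc, if_pos h]
    omega
  · have : (Finset.Icc 1 W).filter
        (fun c : ℕ => (((A : ℤ) < (c : ℤ) ∧ (c : ℤ) ≤ B) ∨ (m ∧ (c : ℤ) = A))) =
        Finset.Ioc A B := by
      ext c
      simp only [Finset.mem_filter, Finset.mem_Icc, Finset.mem_Ioc, h, false_and, or_false]
      omega
    rw [this, Nat.card_Ioc, if_neg h]
    omega

lemma rowOcc_upsilon (n : ℕ) (mu : ℕ → ℕ) (hmu : IsPartition n mu) (x : ℕ → ℕ → ℤ)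
    (M : Finset (ℕ × ℕ)) (hx : IsMGTZ n mu x M) (r v : ℕ) (hv : 1 ≤ v) (hvn : v ≤ n) :
    (rowOcc (mu 1) (Upsilon n x M) r v : ℤ)
      = x v r - x (v - 1) r + if (v, r) ∈ M then 1 else 0 := by
  have hle := gt_le n mu x hx.1 v r
  have hle' := partition_le_one n mu hmu r
  rw [← sum_strip (mu 1) (x (v - 1) r) (x v r) ((v, r) ∈ M) (gt_nonneg n mu x hx.1 _ _)
    (gt_mono n mu x hx.1 _ _ _ (by omega) hvn) (by omega) (mark_pos n mu x M hx v r)]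
  unfold rowOcc Upsilon
  simp [hv, hvn]

lemma rowOcc_omega (n : ℕ) (lam : ℕ → ℕ) (hlam : IsPartition n lam) (y : ℕ → ℕ → ℤ)
    (M : Finset (ℕ × ℕ)) (hy : IsMGTZ n lam y M) (j v : ℕ) (hv : 1 ≤ v) (hvn : v ≤ n) :
    (rowOcc (lam 1) (Omega n lam y M) j v : ℤ)
      = y (n + 1 - v) j - y (n - v) j + if (n + 1 - v, j) ∈ M then 1 else 0 := by
  have hle := gt_le n lam y hy.1 (n + 1 - v) j
  have hle' := partition_le_one n lam hlam j
  have hmark := mark_pos n lam y M hy (n + 1 - v) j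
  rw [show n + 1 - v - 1 = n - v by omega] at hmark
  rw [← sum_strip (lam 1) (y (n - v) j) (y (n + 1 - v) j) ((n + 1 - v, j) ∈ M)
    (gt_nonneg n lam y hy.1 _ _)
    (gt_mono n lam y hy.1 _ _ _ (by omega) (by omega)) (by omega) hmark]
  unfold rowOcc Omega
  -- `Ω` measures columns from the right, so the sum is reflected by `c ↦ lam 1 + 1 - c`.
  congr 1
  refine Finset.sum_nbij' (fun c => lam 1 + 1 - c) (fun c => lam 1 + 1 - c) ?_ ?_ ?_ ?_ ?_
  · intro c hc; simp only [Finset.mem_Icc] at hc ⊢; omega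
  · intro c hc; simp only [Finset.mem_Icc] at hc ⊢; omega
  · intro c hc; simp only [Finset.mem_Icc] at hc; omega
  · intro c hc; simp only [Finset.mem_Icc] at hc; omega
  · intro c hc
    simp only [Finset.mem_Icc] at hc
    have : ((lam 1 + 1 - c : ℕ) : ℤ) = (lam 1 : ℤ) + 1 - (c : ℤ) := by omega
    simp [hv, hvn, this]

lemma upsilon_row_le (n : ℕ) (mu : ℕ → ℕ) (x : ℕ → ℕ → ℤ)
    (M : Finset (ℕ × ℕ)) (hx : IsMGTZ n mu x M) (r c c' : ℕ) (hc : c < c') :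
    ∀ a ∈ Upsilon n x M r c, ∀ b ∈ Upsilon n x M r c', a ≤ b := by
  intro a ha b hb
  simp only [Upsilon, Finset.mem_filter, Finset.mem_Icc] at ha hb
  by_contra! hlt
  have h1 := gt_mono n mu x hx.1 b (a - 1) r (by omega) (by omega)
  have h2 := gt_mono n mu x hx.1 (b - 1) b r (by omega) (by omega)
  omega

/-- `Ω` sends marked GT patterns with bottom row `lam` to set-valued contratableaux of
shape `lam`. -/
lemma omega_isSVCT (n : ℕ) (lam : ℕ → ℕ) (hlam : IsPartition n lam) (y : ℕ → ℕ → ℤ)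
    (M : Finset (ℕ × ℕ)) (hy : IsMGTZ n lam y M) : IsSVCT n lam (Omega n lam y M) := by
  have hmem : ∀ j c v, v ∈ Omega n lam y M j c → 1 ≤ v ∧ v ≤ n ∧
      (lam 1 : ℤ) + 1 - c ≤ y (n + 1 - v) j ∧ y (n - v) j ≤ (lam 1 : ℤ) + 1 - c ∧
      1 ≤ (lam 1 : ℤ) + 1 - c := by
    intro j c v hv
    simp only [Omega, Finset.mem_filter, Finset.mem_Icc] at hv
    have h1 := gt_mono n lam y hy.1 (n - v) (n + 1 - v) j (by omega) (by omega)
    have h2 := gt_nonneg n lam y hy.1 (n - v) j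
    rcases hv with ⟨hv, h | ⟨h, h'⟩⟩
    · omega
    · have h3 := mark_pos n lam y M hy _ _ h
      rw [show n + 1 - v - 1 = n - v by omega] at h3
      omega
  refine ⟨?_, ?_, ?_, ?_, ?_⟩
  · rintro j c ⟨hj, hjn, hc, hcl⟩
    -- The entry comes from the first row of `y` reaching the box.
    have hex : ∃ i, (lam 1 : ℤ) + 1 - c ≤ y i j := ⟨n, by rw [hy.1.2 j hj hjn]; omega⟩
    have hn' : Nat.find hex ≤ n := Nat.find_min' hex (by rw [hy.1.2 j hj hjn]; omega)
    have hspec := Nat.find_spec hex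
    have hpos : 0 < Nat.find hex := by
      rw [Nat.pos_iff_ne_zero]
      intro h0
      rw [h0, hy.1.1.2 0 j (by omega)] at hspec
      omega
    have hmin := Nat.find_min hex (m := Nat.find hex - 1) (by omega)
    set i := Nat.find hex
    refine ⟨n + 1 - i, ?_⟩
    simp only [Omega, Finset.mem_filter, Finset.mem_Icc]
    rw [show n + 1 - (n + 1 - i) = i by omega, show n - (n + 1 - i) = i - 1 by omega]
    exact ⟨by omega, Or.inl ⟨by omega, hspec⟩⟩
  · intro j c _
    exact Finset.filter_subset _ _
  · intro j c hbox
    rw [Finset.eq_empty_iff_forall_notMem]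
    intro v hv
    obtain ⟨h1, h2, h3, h4, h5⟩ := hmem j c v hv
    apply hbox
    have hle := gt_le n lam y hy.1 (n + 1 - v) j
    have hle' := partition_le_one n lam hlam j
    have hin : 1 ≤ j ∧ j ≤ n + 1 - v ∧ n + 1 - v ≤ n := by
      by_contra hin
      rw [hy.1.1.2 _ _ hin] at h3
      omega
    unfold ContraBox
    omega
  · intro j c _ _ a ha b hb
    obtain ⟨a1, a2, a3, a4, a5⟩ := hmem _ _ _ ha
    obtain ⟨b1, b2, b3, b4, b5⟩ := hmem _ _ _ hb
    by_contra! hlt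
    have := gt_mono n lam y hy.1 (n + 1 - a) (n - b) j (by omega) (by omega)
    push_cast at b4
    omega
  · intro j c hbox _ a ha b hb
    obtain ⟨a1, a2, a3, a4, a5⟩ := hmem _ _ _ ha
    by_contra! hlt
    simp only [Omega, Finset.mem_filter, Finset.mem_Icc] at hb
    have h1 := gt_mono n lam y hy.1 (n + 1 - a) (n + 1 - b) (j + 1) (by omega) (by omega)
    have hj : j < n + 1 - b := by
      by_contra hj
      rw [hy.1.1.2 (n + 1 - b) (j + 1) (by omega)] at h1
      omega
    have h2 := (hy.1.1.1 (n + 1 - b) j hbox.1 hj (by omega)).2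
    rw [show n + 1 - b - 1 = n - b by omega] at h2
    rcases hb with ⟨hb, h | ⟨h, h'⟩⟩
    · omega
    · have h3 := (hy.2 _ h).2.2.2
      simp only [show n + 1 - b - 1 = n - b by omega] at h3
      omega

lemma mem_marksOf (n : ℕ) (x : ℕ → ℕ → ℤ) (M : Finset (ℕ × ℕ)) (hM : MarksOK n x M)
    (j v : ℕ) (hvn : v ≤ n) : (n + 1 - v, j) ∈ MarksOf n M ↔ (j + v, v) ∈ M := by
  unfold MarksOf
  rw [Finset.mem_image]
  constructor
  · rintro ⟨⟨a, b⟩, hp, he⟩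
    obtain ⟨h1, h2, h3, -⟩ := hM _ hp
    simp only [Prod.mk.injEq] at he h1 h2 h3
    obtain rfl : b = v := by omega
    obtain rfl : a = j + b := by omega
    exact hp
  · intro h
    exact ⟨_, h, by simp⟩

/-- The pattern `Y_T` with the transported marks is a marked GT pattern with bottom row `lam`:
the `NE` inequalities are the dominance of `T`, and `SE_{i,j}` counts the entries `n - i + j + 1`
in row `n - i + 1` of `T`. -/
lemma Ypat_isMGTZ (n : ℕ) (lam mu : ℕ → ℕ) (hlam : IsPartition n lam) (hmu : IsPartition n mu)
    (x : ℕ → ℕ → ℤ) (M : Finset (ℕ × ℕ)) (hx : IsMGTZ n mu x M)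
    (hdom : LamDominant n lam (rowWordRect n (mu 1) (Upsilon n x M))) :
    IsMGTZ n lam (Ypat n (mu 1) lam (Upsilon n x M)) (MarksOf n M) := by
  have hSE : ∀ i j, 1 ≤ j → j < i → i ≤ n →
      Ypat n (mu 1) lam (Upsilon n x M) (i - 1) j =
        Ypat n (mu 1) lam (Upsilon n x M) i (j + 1) +
          rowOcc (mu 1) (Upsilon n x M) (n - i + 1) (n - i + j + 1) := by
    intro i j h1 h2 h3
    unfold Ypat
    rw [if_pos (by omega), if_pos (by omega), show n - (i - 1) = n - i + 1 by omega,
      show n - i + 1 + j = n - i + j + 1 by omega]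
    unfold Ndom
    rw [Finset.sum_Icc_succ_top (by omega), show n - i + (j + 1) = n - i + j + 1 by omega]
    push_cast
    ring
  refine ⟨⟨⟨?_, ?_⟩, ?_⟩, ?_⟩
  · intro i j h1 h2 h3
    refine ⟨?_, ?_⟩
    · unfold Ypat
      rw [if_pos (by omega), if_pos (by omega), show n - (i - 1) = n - i + 1 by omega,
        show n - i + 1 + j = n - i + j + 1 by omega]
      exact_mod_cast Ndom_le_of_dominant n (mu 1) lam hlam _ hdom
        (upsilon_row_le n mu x M hx) (n - i) (n - i + j) (by omega) (by omega)
    · rw [hSE i j h1 h2 h3]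
      omega
  · intro i j hij
    unfold Ypat
    rw [if_neg hij]
  · intro j h1 h2
    unfold Ypat
    rw [if_pos (by omega)]
    simp [Ndom]
  · intro p hp
    obtain ⟨⟨a, b⟩, hab, rfl⟩ := Finset.mem_image.1 hp
    obtain ⟨h1, h2, h3, -⟩ := hx.2 _ hab
    simp only at h1 h2 h3 ⊢
    refine ⟨by omega, by omega, by omega, ?_⟩
    rw [hSE _ _ (by omega) (by omega) (by omega)]
    have hocc := rowOcc_upsilon n mu hmu x M hx b a (by omega) h3
    rw [if_pos hab] at hocc
    have := gt_mono n mu x hx.1 (a - 1) a b (by omega) h3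
    rw [show n - (n + 1 - b) + 1 = b by omega, show n - (n + 1 - b) + (a - b) + 1 = a by omega]
    omega

/-! ### The row counts of `Γ(T)` -/

/-- The closed form `N_{k+v-1,v-1} + x_{k+v-1,v}` (or `mu v` when `k + v - 1 > n`) of
`mu v` plus the number of `v`s in the rows `k, …, n` from the bottom of `Γ(T)`. -/
def upCount (n : ℕ) (lam mu : ℕ → ℕ) (x : ℕ → ℕ → ℤ) (M : Finset (ℕ × ℕ)) (v k : ℕ) : ℤ :=
  if k + v ≤ n + 1 then
    Ndom (mu 1) lam (Upsilon n x M) (k + v - 1) (v - 1) + x (k + v - 1) v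
  else mu v

lemma upCount_step (n : ℕ) (lam mu : ℕ → ℕ) (hlam : IsPartition n lam)
    (hmu : IsPartition n mu) (x : ℕ → ℕ → ℤ) (M : Finset (ℕ × ℕ)) (hx : IsMGTZ n mu x M)
    (hdom : LamDominant n lam (rowWordRect n (mu 1) (Upsilon n x M)))
    (j v : ℕ) (hj : 1 ≤ j) (hv : 1 ≤ v) (hvn : v ≤ n) :
    upCount n lam mu x M v (j + 1) + rowOcc (lam 1)
      (Omega n lam (Ypat n (mu 1) lam (Upsilon n x M)) (MarksOf n M)) j v
      = upCount n lam mu x M v j := by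
  rw [rowOcc_omega n lam hlam _ _ (Ypat_isMGTZ n lam mu hlam hmu x M hx hdom) j v hv hvn]
  simp only [mem_marksOf n x M hx.2 j v hvn]
  unfold upCount Ypat
  rcases lt_trichotomy (j + v) (n + 1) with h | h | h
  · rw [if_pos (by omega), if_pos (by omega), if_pos (by omega),
      if_pos (show j + v ≤ n + 1 by omega)]
    have hocc := rowOcc_upsilon n mu hmu x M hx v (j + v) (by omega) (by omega)
    rw [show n - (n + 1 - v) = v - 1 by omega, show v - 1 + j = j + v - 1 by omega,
      show n - (n - v) = v by omega, show j + 1 + v - 1 = j + v by omega, add_comm v j]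
    have hN : Ndom (mu 1) lam (Upsilon n x M) (j + v) v =
        Ndom (mu 1) lam (Upsilon n x M) (j + v) (v - 1) +
          rowOcc (mu 1) (Upsilon n x M) v (j + v) := by
      obtain ⟨w, rfl⟩ : ∃ w, v = w + 1 := ⟨v - 1, by omega⟩
      unfold Ndom
      rw [Finset.sum_Icc_succ_top (by omega), Nat.add_sub_cancel, add_assoc]
    rw [hN]
    push_cast
    rw [hocc]
    ring
  · have hnm : (j + v, v) ∉ M := fun hm => by have := (hx.2 _ hm).2.2.1; simp only at this; omega
    rw [if_neg (by omega), if_pos (by omega), if_neg (by omega), if_neg hnm, if_pos (by omega),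
      show n - (n + 1 - v) = v - 1 by omega, show v - 1 + j = n by omega,
      show j + v - 1 = n by omega, hx.1.2 v hv hvn]
    ring
  · have hnm : (j + v, v) ∉ M := fun hm => by have := (hx.2 _ hm).2.2.1; simp only at this; omega
    rw [if_neg (by omega), if_neg (by omega), if_neg (by omega), if_neg hnm, if_neg (by omega)]
    ring

lemma upCount_eq (n : ℕ) (lam mu : ℕ → ℕ) (hlam : IsPartition n lam)
    (hmu : IsPartition n mu) (x : ℕ → ℕ → ℤ) (M : Finset (ℕ × ℕ)) (hx : IsMGTZ n mu x M)
    (hdom : LamDominant n lam (rowWordRect n (mu 1) (Upsilon n x M)))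
    (v : ℕ) (hv : 1 ≤ v) (hvn : v ≤ n) (k : ℕ) (hk : k ≤ n) :
    ((mu v + ∑ t ∈ Finset.range k, rowOcc (lam 1)
      (Omega n lam (Ypat n (mu 1) lam (Upsilon n x M)) (MarksOf n M)) (n - 1 - t + 1) v : ℕ) : ℤ)
      = upCount n lam mu x M v (n - k + 1) := by
  induction k with
  | zero =>
    unfold upCount
    simp only [Nat.sub_zero]
    split_ifs with h
    · omega
    · simp
  | succ k ih =>
    have hs := upCount_step n lam mu hlam hmu x M hx hdom (n - k) v (by omega) hv hvn
    rw [show n - (k + 1) + 1 = n - k by omega, ← hs, ← ih (by omega), Finset.sum_range_succ,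
      show n - 1 - k + 1 = n - k by omega]
    push_cast
    ring

/-- The row-by-row form of the `mu`-dominance of `Γ(T)`; it unwinds to
`[(k+v,v) ∈ M] ≤ SE_{k+v,v}(x)`. -/
lemma upCount_le (n : ℕ) (lam mu : ℕ → ℕ) (hmu : IsPartition n mu)
    (x : ℕ → ℕ → ℤ) (M : Finset (ℕ × ℕ)) (hx : IsMGTZ n mu x M)
    (v k : ℕ) (hv : 1 ≤ v) (hk : 1 ≤ k) :
    upCount n lam mu x M (v + 1) k ≤ upCount n lam mu x M v (k + 1) := by
  unfold upCount
  by_cases h : k + v ≤ n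
  · rw [if_pos (by omega), if_pos (by omega), show k + (v + 1) - 1 = k + v by omega,
      show k + 1 + v - 1 = k + v by omega, Nat.add_sub_cancel]
    have hocc := rowOcc_upsilon n mu hmu x M hx v (k + v) (by omega) h
    have hN : Ndom (mu 1) lam (Upsilon n x M) (k + v) v =
        Ndom (mu 1) lam (Upsilon n x M) (k + v) (v - 1) +
          rowOcc (mu 1) (Upsilon n x M) v (k + v) := by
      obtain ⟨w, rfl⟩ : ∃ w, v = w + 1 := ⟨v - 1, by omega⟩
      unfold Ndom
      rw [Finset.sum_Icc_succ_top (by omega), Nat.add_sub_cancel, add_assoc]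
    have hSE := (hx.1.1.1 (k + v) v hv (by omega) h).2
    rw [hN]
    push_cast
    rw [hocc]
    split_ifs with hm
    · have := (hx.2 _ hm).2.2.2
      simp only at this
      omega
    · omega
  · rw [if_neg (by omega), if_neg (by omega)]
    exact_mod_cast hmu.2.1 v hv

/-- Let `lam, mu, nu ∈ P[n]` and `T ∈ SVT^lam_{nu-lam}(mu)`,
with `(x, M) = Υ⁻¹(T)`.  Then `Γ(T) := Ω(Y_T, M')` — where
`Y_T = (y_{i,j})`, `y_{i,j} = N_{n-i+j,n-i}`, `N_{i,k} = lam i + (number of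
occurrences of i in the top k rows of T)` and `M' = {(n+1-j,i-j) : (i,j) ∈ M}`
— is a `mu`-dominant set-valued contratableau of shape `lam` with weight
`nu - mu`; i.e. `Γ` maps `SVT^lam_{nu-lam}(mu)` into `SVCT^mu_{nu-mu}(lam)`. -/
theorem gamma_mapsTo (n : ℕ) (hn : 0 < n) (lam mu nu : ℕ → ℕ)
    (hlam : IsPartition n lam) (hmu : IsPartition n mu) (hnu : IsPartition n nu)
    (T : ℕ → ℕ → Finset ℕ)
    (hT : IsSSVT n (ShapeBox mu) T)
    (hdom : LamDominant n lam (rowWordRect n (mu 1) T))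
    (hwt : ∀ i, 1 ≤ i → i ≤ n → lam i + wtT n (mu 1) T i = nu i)
    (x : ℕ → ℕ → ℤ) (M : Finset (ℕ × ℕ))
    (hxM : IsMGTZ n mu x M) (hUps : Upsilon n x M = T) :
    IsSVCT n lam (Omega n lam (Ypat n (mu 1) lam T) (MarksOf n M)) ∧
    LamDominant n mu
      (contraRowWord n (lam 1) (Omega n lam (Ypat n (mu 1) lam T) (MarksOf n M))) ∧
    ∀ i, 1 ≤ i → i ≤ n →
      mu i + wtT n (lam 1) (Omega n lam (Ypat n (mu 1) lam T) (MarksOf n M)) i = nu i := by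
  subst hUps
  have hY := Ypat_isMGTZ n lam mu hlam hmu x M hxM hdom
  refine ⟨omega_isSVCT n lam hlam _ _ hY, ?_, ?_⟩
  · set G := Omega n lam (Ypat n (mu 1) lam (Upsilon n x M)) (MarksOf n M) with hG
    have hword : contraRowWord n (lam 1) G =
        ((List.range n).map (fun t => rowWord (lam 1) G (n - 1 - t + 1))).flatten := by
      change (((List.range n).reverse).map (fun j => rowWord (lam 1) G (j + 1))).flatten = _
      congr 1
      apply List.ext_getElem
      · simp
      · intro t h1 h2
        simp
    unfold LamDominant
    rw [hword]
    apply dominant_append_flatten _ _ (dominant_superWord n mu hmu)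
    intro k hk i hi
    simp only [List.length_map, List.length_range] at hk
    simp only [← List.map_take, List.take_range, min_eq_left (show k + 1 ≤ n by omega),
      min_eq_left hk.le, List.count_append, count_flatten_map_range, count_rowWord]
    rw [count_superWord_of_partition n mu hmu _ (by omega),
      count_superWord_of_partition n mu hmu _ hi]
    by_cases hin : i + 1 ≤ n
    · have h1 := upCount_eq n lam mu hlam hmu x M hxM hdom (i + 1) (by omega) hin (k + 1) hk
      have h2 := upCount_eq n lam mu hlam hmu x M hxM hdom i hi (by omega) k hk.le
      have h3 := upCount_le n lam mu hmu x M hxM i (n - k) hi (by omega)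
      rw [show n - (k + 1) + 1 = n - k by omega] at h1
      rw [← h1, ← h2] at h3
      exact_mod_cast h3
    · -- Entries beyond `n` do not occur.
      have hz : ∀ r, rowOcc (lam 1) G r (i + 1) = 0 := by
        intro r
        unfold rowOcc
        refine Finset.sum_eq_zero (fun c _ => if_neg ?_)
        simp only [hG, Omega, Finset.mem_filter, Finset.mem_Icc]
        omega
      simp only [hz, Finset.sum_const_zero, hmu.2.2 (i + 1) (by omega)]
      omega
  · intro v hv hvn
    have h := upCount_eq n lam mu hlam hmu x M hxM hdom v hv hvn n le_rfl
    rw [Finset.sum_range_reflect (fun t => rowOcc (lam 1) (Omega n lam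
      (Ypat n (mu 1) lam (Upsilon n x M)) (MarksOf n M)) (t + 1) v) n,
      ← sum_Icc_one_eq_range (fun r => rowOcc (lam 1) (Omega n lam
      (Ypat n (mu 1) lam (Upsilon n x M)) (MarksOf n M)) r v) n] at h
    have hz : ∀ r, v < r → rowOcc (mu 1) (Upsilon n x M) r v = 0 := by
      intro r hr
      have ho := rowOcc_upsilon n mu hmu x M hxM r v hv hvn
      have hnm : (v, r) ∉ M := fun hm => by
        have := (hxM.2 _ hm).2.1
        simp only at this
        omega
      rw [hxM.1.1.2 v r (by omega), hxM.1.1.2 (v - 1) r (by omega), if_neg hnm] at ho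
      omega
    have hdiag : (rowOcc (mu 1) (Upsilon n x M) v v : ℤ) = x v v := by
      have hnm : (v, v) ∉ M := fun hm => by
        have := (hxM.2 _ hm).2.1
        simp only at this
        omega
      rw [rowOcc_upsilon n mu hmu x M hxM v v hv hvn, hxM.1.1.2 (v - 1) v (by omega), if_neg hnm]
      ring
    have hsum : wtT n (mu 1) (Upsilon n x M) v =
        ∑ r ∈ Finset.Icc 1 (v - 1), rowOcc (mu 1) (Upsilon n x M) r v +
          rowOcc (mu 1) (Upsilon n x M) v v := by
      unfold wtT
      rw [← Finset.sum_subset (Finset.Icc_subset_Icc_right hvn)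
        (fun r _ hr => hz r (by simp_all [Finset.mem_Icc]))]
      obtain ⟨w, rfl⟩ : ∃ w, v = w + 1 := ⟨v - 1, by omega⟩
      rw [Finset.sum_Icc_succ_top (by omega), Nat.add_sub_cancel]
    rw [← hwt v hv hvn, hsum]
    unfold upCount at h
    rw [if_pos (by omega), show n - n + 1 + v - 1 = v by omega, ← hdiag] at h
    unfold Ndom at h
    unfold wtT
    zify
    push_cast at h
    linarith
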